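/- arXiv:math/9906028 — 2 statements merged into one kernel-verified Lean document; each statement's English description precedes it below -/
import Mathlib

section
/- Let k ≥ 2 be an integer and let m, n be nonnegative integers. Let T : ℕ → ℕ → ℝ be any function satisfying T(1, m) = 0 for all m ≥ 0, T(k', 0) = 1 for all k' ≥ 2, and for all k' ≥ 2 and m' ≥ 1 the recurrence T(k', m') − T(k', m' − 1) = ((k'(k' − 2))^{m'} · ((k' − 1)/2)_{m'}) / ((k' − 1)^{2m'} · (k'/2)_{m'}) · T(k' − 1, m'). Then ∫_{[0,∞)^k} (e₂(x))^m (e₁(x))^n e^{−e₁(x)} dx = (m! · (2m + n + k − 1)! · (k/2)_m / (2m + k − 1)!) · (2(k − 1)/k)^m · T(k, m). -/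
open MeasureTheory Finset

/-- `e₁(x) = ∑ᵢ xᵢ` -/
noncomputable def e1 {k : ℕ} (x : Fin k → ℝ) : ℝ := ∑ i, x i

/-- `e₂(x) = ∑_{i<j} xᵢ xⱼ` -/
noncomputable def e2 {k : ℕ} (x : Fin k → ℝ) : ℝ := ∑ i, ∑ j ∈ Finset.Ioi i, x i * x j

/-- Pochhammer symbol `(y)ₘ = ∏_{i=0}^{m-1} (y + i)` -/
noncomputable def poch (y : ℝ) (m : ℕ) : ℝ := ∏ i ∈ Finset.range m, (y + i)

/-- The value of `∫ p(x) e^{-∑ xᵢ} dx` over the positive orthant, as a linear functional on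
polynomials: the monomial `x^a` is sent to `∏ᵢ aᵢ!`. -/
noncomputable def laplaceFunctional (k : ℕ) : MvPolynomial (Fin k) ℝ →ₗ[ℝ] ℝ :=
  (MvPolynomial.basisMonomials (Fin k) ℝ).constr ℝ fun a => ∏ i, ((a i).factorial : ℝ)

/-- The first elementary symmetric polynomial. -/
noncomputable def esymmOne (k : ℕ) : MvPolynomial (Fin k) ℝ := ∑ i, MvPolynomial.X i

/-- The second elementary symmetric polynomial, written through power sums. -/
noncomputable def esymmTwo (k : ℕ) : MvPolynomial (Fin k) ℝ :=
  MvPolynomial.C (1 / 2) * (esymmOne k ^ 2 - ∑ i, MvPolynomial.X i ^ 2)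

lemma laplaceFunctional_monomial {k : ℕ} (a : Fin k →₀ ℕ) (c : ℝ) :
    laplaceFunctional k (MvPolynomial.monomial a c) = c * ∏ i, ((a i).factorial : ℝ) := by
  have h : MvPolynomial.monomial a c = c • MvPolynomial.basisMonomials (Fin k) ℝ a := by
    simp [MvPolynomial.smul_monomial]
  rw [h, map_smul, laplaceFunctional, Module.Basis.constr_basis, smul_eq_mul]

lemma integrableOn_pow_mul_exp_neg (n : ℕ) :
    IntegrableOn (fun x : ℝ => x ^ n * Real.exp (-x)) (Set.Ici 0) := by
  rw [integrableOn_Ici_iff_integrableOn_Ioi]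
  refine (Real.GammaIntegral_convergent (s := n + 1) (by positivity)).congr_fun (fun x _ => ?_)
    measurableSet_Ioi
  simp [mul_comm]

lemma integral_pow_mul_exp_neg (n : ℕ) :
    ∫ x : ℝ in Set.Ici 0, x ^ n * Real.exp (-x) = n.factorial := by
  rw [MeasureTheory.integral_Ici_eq_integral_Ioi, ← Real.Gamma_nat_eq_factorial,
    Real.Gamma_eq_integral (by positivity)]
  refine setIntegral_congr_fun measurableSet_Ioi fun x _ => ?_
  simp [mul_comm]

lemma integrable_and_integral_eval_mul_exp {k : ℕ} (p : MvPolynomial (Fin k) ℝ) :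
    IntegrableOn (fun x : Fin k → ℝ => MvPolynomial.eval x p * Real.exp (-(e1 x)))
      (Set.univ.pi fun _ => Set.Ici (0 : ℝ)) ∧
    ∫ x : Fin k → ℝ in Set.univ.pi fun _ => Set.Ici (0 : ℝ),
      MvPolynomial.eval x p * Real.exp (-(e1 x)) = laplaceFunctional k p := by
  induction p using MvPolynomial.induction_on' with
  | monomial a c =>
    have h : (fun x : Fin k → ℝ =>
        MvPolynomial.eval x (MvPolynomial.monomial a c) * Real.exp (-(e1 x))) =
        fun x => c * ∏ i, (x i ^ a i * Real.exp (-(x i))) := by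
      ext x
      rw [MvPolynomial.eval_monomial, e1, ← Finset.sum_neg_distrib, Real.exp_sum,
        Finset.prod_mul_distrib, Finsupp.prod_fintype _ _ (by simp), mul_assoc]
    rw [h, IntegrableOn, volume_pi, Measure.restrict_pi_pi]
    refine ⟨(Integrable.fintype_prod fun i => integrableOn_pow_mul_exp_neg (a i)).const_mul c, ?_⟩
    rw [integral_const_mul,
      integral_fintype_prod_eq_prod (fun i (t : ℝ) => t ^ a i * Real.exp (-t)),
      laplaceFunctional_monomial]
    simp only [integral_pow_mul_exp_neg]
  | add p q hp hq =>
    simp only [map_add, add_mul]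
    exact ⟨hp.1.add hq.1, by rw [integral_add hp.1 hq.1, hp.2, hq.2]⟩

lemma prod_factorial_single_add {k : ℕ} (i : Fin k) (a : Fin k →₀ ℕ) :
    ∏ j, (((Finsupp.single i 1 + a : Fin k →₀ ℕ) j).factorial : ℝ) =
      (a i + 1) * ∏ j, ((a j).factorial : ℝ) := by
  rw [← Finset.mul_prod_erase _ _ (Finset.mem_univ i),
    ← Finset.mul_prod_erase (a := i) _ (fun j => ((a j).factorial : ℝ)) (Finset.mem_univ i),
    ← mul_assoc]
  congr 1
  · simp [add_comm 1, Nat.factorial_succ]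
  · refine Finset.prod_congr rfl fun j hj => ?_
    simp [(Finset.ne_of_mem_erase hj).symm]

lemma laplaceFunctional_X_mul {k : ℕ} (i : Fin k) (p : MvPolynomial (Fin k) ℝ) :
    laplaceFunctional k (MvPolynomial.X i * p) =
      laplaceFunctional k p + laplaceFunctional k (MvPolynomial.X i * MvPolynomial.pderiv i p) := by
  induction p using MvPolynomial.induction_on' with
  | monomial a c =>
    rw [MvPolynomial.X_mul_pderiv_monomial, map_nsmul, MvPolynomial.X,
      MvPolynomial.monomial_mul, laplaceFunctional_monomial, laplaceFunctional_monomial,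
      prod_factorial_single_add, nsmul_eq_mul]
    ring
  | add p q hp hq =>
    simp only [map_add, mul_add, hp, hq]
    ring

/-- Integration by parts in the `i`-th variable. -/
lemma laplaceFunctional_eq_pderiv_add {k : ℕ} (i : Fin (k + 1))
    (p : MvPolynomial (Fin (k + 1)) ℝ) :
    laplaceFunctional (k + 1) p = laplaceFunctional (k + 1) (MvPolynomial.pderiv i p) +
      laplaceFunctional k (MvPolynomial.aeval (i.insertNth 0 MvPolynomial.X) p) := by
  induction p using MvPolynomial.induction_on' with
  | monomial a c =>
    have haeval : MvPolynomial.aeval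
        (i.insertNth 0 MvPolynomial.X : Fin (k + 1) → MvPolynomial (Fin k) ℝ)
        (MvPolynomial.monomial a c) = 0 ^ a i * MvPolynomial.monomial
          (Finsupp.equivFunOnFinite.symm fun j => a (i.succAbove j)) c := by
      rw [MvPolynomial.aeval_monomial, MvPolynomial.monomial_eq,
        Finsupp.prod_fintype _ _ (by simp), Finsupp.prod_fintype _ _ (by simp),
        Fin.prod_univ_succAbove _ i]
      simp [MvPolynomial.algebraMap_eq]
      ring
    rw [haeval]
    by_cases h : a i = 0
    · simp [h, laplaceFunctional_monomial, Fin.prod_univ_succAbove _ i]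
    · obtain ⟨b, rfl⟩ : ∃ b, a = Finsupp.single i 1 + b :=
        ⟨a - Finsupp.single i 1,
          (add_tsub_cancel_of_le (by simpa [Nat.one_le_iff_ne_zero] using h)).symm⟩
      rw [zero_pow h, zero_mul, map_zero, add_zero, MvPolynomial.pderiv_monomial,
        add_tsub_cancel_left, laplaceFunctional_monomial, laplaceFunctional_monomial,
        prod_factorial_single_add]
      simp
      ring
  | add p q hp hq =>
    simp only [map_add]
    rw [hp, hq]
    ring

lemma sq_sum_eq_sum_sq_add {k : ℕ} (x : Fin k → ℝ) :
    (∑ i, x i) ^ 2 = ∑ i, x i ^ 2 + 2 * ∑ i, ∑ j ∈ Finset.Ioi i, x i * x j := by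
  induction k with
  | zero => simp
  | succ k ih =>
    have h := ih fun i => x i.succ
    simp only [Fin.sum_univ_succ, Fin.sum_Ioi_zero, Fin.sum_Ioi_succ, ← Finset.mul_sum] at h ⊢
    linear_combination h

lemma eval_esymmOne {k : ℕ} (x : Fin k → ℝ) : MvPolynomial.eval x (esymmOne k) = e1 x := by
  simp [esymmOne, e1]

lemma eval_esymmTwo {k : ℕ} (x : Fin k → ℝ) : MvPolynomial.eval x (esymmTwo k) = e2 x := by
  simp only [esymmTwo, map_mul, map_sub, map_pow, eval_esymmOne, map_sum, MvPolynomial.eval_X,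
    MvPolynomial.eval_C, e1, e2, sq_sum_eq_sum_sq_add]
  ring

lemma pderiv_esymmOne {k : ℕ} (i : Fin k) : MvPolynomial.pderiv i (esymmOne k) = 1 := by
  simp [esymmOne, MvPolynomial.pderiv_X, Pi.single_apply]

lemma C_half_mul_two {k : ℕ} (p : MvPolynomial (Fin k) ℝ) :
    MvPolynomial.C (1 / 2 : ℝ) * (2 * p) = p := by
  have h : (2 : MvPolynomial (Fin k) ℝ) = MvPolynomial.C 2 := (map_ofNat _ 2).symm
  rw [h, ← mul_assoc, ← MvPolynomial.C_mul]
  norm_num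

lemma pderiv_esymmTwo {k : ℕ} (i : Fin k) :
    MvPolynomial.pderiv i (esymmTwo k) = esymmOne k - MvPolynomial.X i := by
  rw [← C_half_mul_two (esymmOne k - MvPolynomial.X i)]
  simp [esymmTwo, Derivation.leibniz_pow, pderiv_esymmOne, MvPolynomial.pderiv_X, Pi.single_apply,
    mul_sub]

lemma sum_pderiv_esymmTwo (k : ℕ) :
    ∑ i, MvPolynomial.pderiv i (esymmTwo k) = ((k : ℝ) - 1) • esymmOne k := by
  simp only [pderiv_esymmTwo, Finset.sum_sub_distrib]
  rw [← esymmOne]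
  simp [sub_smul, MvPolynomial.smul_eq_C_mul]

lemma sum_X_mul_pderiv_esymmTwo (k : ℕ) :
    ∑ i, MvPolynomial.X i * MvPolynomial.pderiv i (esymmTwo k) = 2 * esymmTwo k := by
  simp only [pderiv_esymmTwo, mul_sub, Finset.sum_sub_distrib, ← Finset.sum_mul]
  rw [← esymmOne, esymmTwo, mul_left_comm, C_half_mul_two]
  simp only [sq]

lemma sum_X_mul_pderiv_pow_mul_pow (k m n : ℕ) :
    ∑ i, MvPolynomial.X i * MvPolynomial.pderiv i (esymmTwo k ^ m * esymmOne k ^ n) =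
      ((2 * m + n : ℕ) : ℝ) • (esymmTwo k ^ m * esymmOne k ^ n) := by
  have h : ∀ i, MvPolynomial.X i * MvPolynomial.pderiv i (esymmTwo k ^ m * esymmOne k ^ n) =
      ((m : MvPolynomial (Fin k) ℝ) * esymmTwo k ^ (m - 1) * esymmOne k ^ n) *
          (MvPolynomial.X i * MvPolynomial.pderiv i (esymmTwo k)) +
        ((n : MvPolynomial (Fin k) ℝ) * esymmTwo k ^ m * esymmOne k ^ (n - 1)) *
          MvPolynomial.X i := by
    intro i
    rw [Derivation.leibniz, Derivation.leibniz_pow, Derivation.leibniz_pow, pderiv_esymmOne]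
    simp only [smul_eq_mul, nsmul_eq_mul]
    ring
  simp only [h, Finset.sum_add_distrib, ← Finset.mul_sum]
  rw [sum_X_mul_pderiv_esymmTwo, ← esymmOne, MvPolynomial.smul_eq_C_mul]
  simp only [map_natCast]
  rcases m with _ | m <;> rcases n with _ | n <;> simp <;> ring

/-- Euler's identity for the homogeneous polynomial `e₂^m e₁^n`. -/
lemma laplaceFunctional_pow_mul_pow_succ (k m n : ℕ) :
    laplaceFunctional k (esymmTwo k ^ m * esymmOne k ^ (n + 1)) =
      (2 * m + n + k) * laplaceFunctional k (esymmTwo k ^ m * esymmOne k ^ n) := by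
  have h : esymmTwo k ^ m * esymmOne k ^ (n + 1) =
      ∑ i, MvPolynomial.X i * (esymmTwo k ^ m * esymmOne k ^ n) := by
    rw [← Finset.sum_mul, ← esymmOne]
    ring
  rw [h, map_sum]
  simp only [fun i => laplaceFunctional_X_mul i (esymmTwo k ^ m * esymmOne k ^ n),
    Finset.sum_add_distrib]
  rw [← map_sum (laplaceFunctional k) (fun i => MvPolynomial.X i * MvPolynomial.pderiv i _),
    sum_X_mul_pderiv_pow_mul_pow, map_smul]
  simp
  ring

lemma laplaceFunctional_pow_mul_pow (k m n : ℕ) :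
    laplaceFunctional (k + 1) (esymmTwo (k + 1) ^ m * esymmOne (k + 1) ^ n) =
      ((2 * m + n + k).factorial : ℝ) / ((2 * m + k).factorial : ℝ) *
        laplaceFunctional (k + 1) (esymmTwo (k + 1) ^ m) := by
  induction n with
  | zero => simp [Nat.factorial_ne_zero]
  | succ n ih =>
    rw [laplaceFunctional_pow_mul_pow_succ, ih,
      show 2 * m + (n + 1) + k = (2 * m + n + k) + 1 by ring, Nat.factorial_succ]
    push_cast
    ring

lemma aeval_insertNth_esymmTwo {k : ℕ} (i : Fin (k + 1)) :
    MvPolynomial.aeval (i.insertNth 0 MvPolynomial.X : Fin (k + 1) → MvPolynomial (Fin k) ℝ)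
      (esymmTwo (k + 1)) = esymmTwo k := by
  simp [esymmTwo, esymmOne, Fin.sum_univ_succAbove _ i, MvPolynomial.algebraMap_eq]

lemma laplaceFunctional_esymmTwo_pow_succ (k m : ℕ) :
    (k + 1) * laplaceFunctional (k + 1) (esymmTwo (k + 1) ^ (m + 1)) =
      (k + 1) * laplaceFunctional k (esymmTwo k ^ (m + 1)) +
        (m + 1) * k * (2 * m + k + 1) * laplaceFunctional (k + 1) (esymmTwo (k + 1) ^ m) := by
  have hsum := Finset.sum_congr (rfl : (univ : Finset (Fin (k + 1))) = univ) fun i _ =>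
    laplaceFunctional_eq_pderiv_add i (esymmTwo (k + 1) ^ (m + 1))
  have hderiv : ∑ i, MvPolynomial.pderiv i (esymmTwo (k + 1) ^ (m + 1)) =
      (((m : ℝ) + 1) * k) • (esymmTwo (k + 1) ^ m * esymmOne (k + 1) ^ 1) := by
    simp only [Derivation.leibniz_pow, ← Finset.smul_sum]
    rw [sum_pderiv_esymmTwo]
    simp [MvPolynomial.smul_eq_C_mul]
    ring
  have heuler := laplaceFunctional_pow_mul_pow_succ (k + 1) m 0
  simp only [map_pow, aeval_insertNth_esymmTwo, Finset.sum_add_distrib, Finset.sum_const,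
    Finset.card_univ, Fintype.card_fin, ← map_sum, hderiv, map_smul, smul_eq_mul, nsmul_eq_mul]
    at hsum
  simp only [zero_add, pow_zero, mul_one] at heuler
  rw [heuler] at hsum
  push_cast at hsum
  linear_combination hsum

lemma laplaceFunctional_one (k : ℕ) : laplaceFunctional k 1 = 1 := by
  have h := laplaceFunctional_monomial (k := k) 0 1
  simpa using h

lemma esymmTwo_one : esymmTwo 1 = 0 := by
  simp [esymmTwo, esymmOne]

lemma poch_succ (y : ℝ) (m : ℕ) : poch y (m + 1) = poch y m * (y + m) := by
  simp [poch, Finset.prod_range_succ]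

lemma poch_pos {y : ℝ} (hy : 0 < y) (m : ℕ) : 0 < poch y m :=
  Finset.prod_pos fun i _ => by positivity

lemma laplaceFunctional_esymmTwo_pow (k m : ℕ) (T : ℕ → ℕ → ℝ)
    (hT1 : ∀ m' : ℕ, T 1 m' = 0)
    (hT0 : ∀ k' : ℕ, 2 ≤ k' → T k' 0 = 1)
    (hTrec : ∀ k' m' : ℕ, 2 ≤ k' → 1 ≤ m' →
      T k' m' - T k' (m' - 1) =
        ((k' * (k' - 2) : ℕ) : ℝ) ^ m' * poch (((k' - 1 : ℕ) : ℝ) / 2) m' /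
          (((k' - 1 : ℕ) : ℝ) ^ (2 * m') * poch ((k' : ℝ) / 2) m') * T (k' - 1) m')
    (hkm : k ≠ 0 ∨ m ≠ 0) :
    laplaceFunctional (k + 1) (esymmTwo (k + 1) ^ m) =
      m.factorial * poch (((k + 1 : ℕ) : ℝ) / 2) m * (2 * k / ((k + 1 : ℕ) : ℝ)) ^ m *
        T (k + 1) m := by
  induction k generalizing m with
  | zero =>
    have hm : m ≠ 0 := by simpa using hkm
    simp [esymmTwo_one, hT1, hm]
  | succ k ihk =>
    induction m with
    | zero => simp [laplaceFunctional_one, hT0, poch]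
    | succ m ihm =>
      have hrec := hTrec (k + 1 + 1) (m + 1) (by omega) (by omega)
      have hL := laplaceFunctional_esymmTwo_pow_succ (k + 1) m
      rw [ihm (by simp), ihk (m + 1) (by simp)] at hL
      have hP := poch_pos (y := ((k + 1 + 1 : ℕ) : ℝ) / 2) (by positivity) m
      simp only [Nat.add_sub_cancel, show k + 1 + 1 - 2 = k by omega] at hrec
      have hTe := eq_add_of_sub_eq hrec
      rw [hTe]
      have hk : ((k : ℝ) + 1 + 1) ≠ 0 := by positivity
      apply mul_left_cancel₀ hk
      push_cast at hL hP ⊢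
      rw [hL]
      have hQ := poch_succ (((k : ℝ) + 1 + 1) / 2) m
      rw [Nat.factorial_succ, hQ]
      push_cast
      generalize poch (((k : ℝ) + 1) / 2) (m + 1) = A at *
      generalize poch (((k : ℝ) + 1 + 1) / 2) m = B at *
      have hk1 : ((k : ℝ) + 1) ≠ 0 := by positivity
      have hB : B ≠ 0 := hP.ne'
      have hC : ((k : ℝ) + 1 + 1) / 2 + m ≠ 0 := by positivity
      simp only [div_pow, mul_pow, pow_mul, pow_succ]
      field_simp
      ring

theorem stmt0 (k : ℕ) (hk : 2 ≤ k) (m n : ℕ) (T : ℕ → ℕ → ℝ)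
    (hT1 : ∀ m' : ℕ, T 1 m' = 0)
    (hT0 : ∀ k' : ℕ, 2 ≤ k' → T k' 0 = 1)
    (hTrec : ∀ k' m' : ℕ, 2 ≤ k' → 1 ≤ m' →
      T k' m' - T k' (m' - 1) =
        ((k' * (k' - 2) : ℕ) : ℝ) ^ m' * poch (((k' - 1 : ℕ) : ℝ) / 2) m' /
          (((k' - 1 : ℕ) : ℝ) ^ (2 * m') * poch ((k' : ℝ) / 2) m') * T (k' - 1) m') :
    ∫ x : Fin k → ℝ in Set.univ.pi fun _ => Set.Ici (0 : ℝ),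
        e2 x ^ m * e1 x ^ n * Real.exp (-(e1 x)) =
      (m.factorial : ℝ) * ((2 * m + n + k - 1).factorial : ℝ) * poch ((k : ℝ) / 2) m /
          ((2 * m + k - 1).factorial : ℝ) *
        (2 * ((k : ℝ) - 1) / k) ^ m * T k m := by
  obtain ⟨k, rfl⟩ : ∃ j, k = j + 1 := ⟨k - 1, by omega⟩
  have h := (integrable_and_integral_eval_mul_exp
    (esymmTwo (k + 1) ^ m * esymmOne (k + 1) ^ n)).2
  simp only [map_mul, map_pow, eval_esymmOne, eval_esymmTwo] at h
  rw [h, laplaceFunctional_pow_mul_pow,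
    laplaceFunctional_esymmTwo_pow k m T hT1 hT0 hTrec (Or.inl (by omega))]
  simp only [← add_assoc, Nat.add_sub_cancel]
  push_cast
  ring
end

section
/- Let k ≥ 2 be an integer and let m, n be nonnegative integers. Then ∫_{[0,∞)^k} (e₂(x))^m (e₁(x))^n e^{−e₁(x)} dx = (m! · (2m + n + k − 1)! · (k/2)_m / (2m + k − 1)!) · (2(k − 1)/k)^m · (1 + Σ_{r=1}^{k−2} Σ_{1 ≤ s_r ≤ s_{r−1} ≤ ⋯ ≤ s_1 ≤ m} ∏_{i=1}^{r} (((k − i)² − 1)^{s_i} · ((k − i)/2)_{s_i}) / ((k − i)^{2 s_i} · ((k − i + 1)/2)_{s_i})). -/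
open MeasureTheory Finset

namespace ExpMoment

open MvPolynomial

/-- The linear functional `x^α ↦ ∏ αᵢ!`, i.e. integration against `exp (-∑ xᵢ)` on the orthant. -/
noncomputable def expMoment (k : ℕ) : MvPolynomial (Fin k) ℝ →ₗ[ℝ] ℝ :=
  (basisMonomials (Fin k) ℝ).constr ℝ fun s => ∏ i, ((s i).factorial : ℝ)

theorem expMoment_monomial {k : ℕ} (s : Fin k →₀ ℕ) (c : ℝ) :
    expMoment k (monomial s c) = c * ∏ i, ((s i).factorial : ℝ) := by
  have h : monomial s c = c • basisMonomials (Fin k) ℝ s := by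
    simp [coe_basisMonomials, smul_monomial]
  rw [h, map_smul, expMoment, Module.Basis.constr_basis, smul_eq_mul]

theorem expMoment_one (k : ℕ) : expMoment k 1 = 1 := by
  have h := expMoment_monomial (0 : Fin k →₀ ℕ) 1
  simpa using h

theorem integrableOn_pow_mul_exp_neg (n : ℕ) :
    IntegrableOn (fun t : ℝ => t ^ n * Real.exp (-t)) (Set.Ici 0) := by
  rw [integrableOn_Ici_iff_integrableOn_Ioi]
  have h := Real.GammaIntegral_convergent (s := (n : ℝ) + 1) (by positivity)
  refine h.congr_fun (fun t _ => ?_) measurableSet_Ioi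
  simp [mul_comm]

theorem integral_pow_mul_exp_neg (n : ℕ) :
    ∫ t in Set.Ici (0 : ℝ), t ^ n * Real.exp (-t) = (n.factorial : ℝ) := by
  rw [MeasureTheory.integral_Ici_eq_integral_Ioi, ← Real.Gamma_nat_eq_factorial,
    Real.Gamma_eq_integral (by positivity)]
  refine setIntegral_congr_fun measurableSet_Ioi fun t _ => ?_
  simp [mul_comm]

theorem eval_monomial_mul_exp {k : ℕ} (s : Fin k →₀ ℕ) (c : ℝ) (x : Fin k → ℝ) :
    eval x (monomial s c) * Real.exp (-e1 x) =
      c * ∏ i, (x i ^ s i * Real.exp (-x i)) := by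
  rw [eval_monomial, Finsupp.prod_fintype _ _ (by simp), Finset.prod_mul_distrib, ← Real.exp_sum,
    Finset.sum_neg_distrib, e1, mul_assoc]

theorem integrableOn_eval_mul_exp {k : ℕ} (p : MvPolynomial (Fin k) ℝ) :
    IntegrableOn (fun x => eval x p * Real.exp (-e1 x))
      (Set.univ.pi fun _ => Set.Ici (0 : ℝ)) := by
  induction p using MvPolynomial.induction_on' with
  | monomial s c =>
    simp only [eval_monomial_mul_exp]
    refine Integrable.const_mul ?_ c
    rw [volume_pi, Measure.restrict_pi_pi]
    exact Integrable.fintype_prod (f := fun i (t : ℝ) => t ^ s i * Real.exp (-t))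
      fun i => integrableOn_pow_mul_exp_neg (s i)
  | add p q hp hq =>
    simp only [map_add, add_mul]
    exact hp.add hq

theorem integral_eval_mul_exp {k : ℕ} (p : MvPolynomial (Fin k) ℝ) :
    ∫ x in Set.univ.pi fun _ => Set.Ici (0 : ℝ), eval x p * Real.exp (-e1 x) =
      expMoment k p := by
  induction p using MvPolynomial.induction_on' with
  | monomial s c =>
    simp only [eval_monomial_mul_exp]
    rw [integral_const_mul, volume_pi, Measure.restrict_pi_pi,
      integral_fintype_prod_eq_prod (fun i (t : ℝ) => t ^ s i * Real.exp (-t)),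
      expMoment_monomial]
    simp only [integral_pow_mul_exp_neg]
  | add p q hp hq =>
    simp only [map_add, add_mul]
    rw [integral_add (integrableOn_eval_mul_exp p) (integrableOn_eval_mul_exp q), hp, hq]

theorem expMoment_X_mul {k : ℕ} (i : Fin k) (p : MvPolynomial (Fin k) ℝ) :
    expMoment k (X i * p) = expMoment k p + expMoment k (X i * pderiv i p) := by
  induction p using MvPolynomial.induction_on' with
  | monomial s c =>
    rw [X_mul_pderiv_monomial, map_nsmul, X, monomial_mul, one_mul, expMoment_monomial,
      expMoment_monomial, ← Finset.mul_prod_erase _ _ (Finset.mem_univ i),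
      ← Finset.mul_prod_erase univ (fun j => ((s j).factorial : ℝ)) (Finset.mem_univ i)]
    have h : ∏ j ∈ univ.erase i, (((Finsupp.single i 1 + s : Fin k →₀ ℕ) j).factorial : ℝ) =
        ∏ j ∈ univ.erase i, ((s j).factorial : ℝ) := by
      refine Finset.prod_congr rfl fun j hj => ?_
      simp [Finsupp.single_eq_of_ne (Finset.ne_of_mem_erase hj)]
    rw [h]
    simp only [Finsupp.add_apply, Finsupp.single_eq_same, add_comm 1, Nat.factorial_succ]
    push_cast
    simp only [nsmul_eq_mul]
    ring
  | add p q hp hq =>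
    simp only [map_add, mul_add, hp, hq]
    ring

theorem expMoment_sum_X_mul {k d : ℕ} {p : MvPolynomial (Fin k) ℝ} (hp : p.IsHomogeneous d) :
    expMoment k ((∑ i, X i) * p) = (k + d) * expMoment k p := by
  rw [Finset.sum_mul, map_sum, Finset.sum_congr rfl fun i _ => expMoment_X_mul i p,
    Finset.sum_add_distrib, ← map_sum _ fun i => X i * pderiv i p, hp.sum_X_mul_pderiv, map_nsmul]
  simp
  ring

theorem expMoment_eq_pderiv_add {k : ℕ} (p : MvPolynomial (Fin (k + 1)) ℝ) :
    expMoment (k + 1) p = expMoment (k + 1) (pderiv 0 p) +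
      expMoment k (aeval (Fin.cons 0 X : Fin (k + 1) → MvPolynomial (Fin k) ℝ) p) := by
  induction p using MvPolynomial.induction_on' with
  | monomial s c =>
    have h : aeval (Fin.cons 0 X : Fin (k + 1) → MvPolynomial (Fin k) ℝ) (monomial s c) =
        0 ^ s 0 * monomial s.tail c := by
      rw [aeval_monomial, Finsupp.prod_fintype _ _ (by simp), Fin.prod_univ_succ,
        monomial_eq, Finsupp.prod_fintype _ _ (by simp)]
      simp [Finsupp.tail_apply, algebraMap_eq]
      ring
    rw [h, pderiv_monomial, expMoment_monomial, expMoment_monomial]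
    rcases hs : s 0 with _ | a
    · simp [expMoment_monomial, Fin.prod_univ_succ, hs, Finsupp.tail_apply]
    · simp [Fin.prod_univ_succ, hs, Nat.factorial_succ, Fin.succ_ne_zero]
      ring
  | add p q hp hq =>
    simp only [map_add, hp, hq]
    ring

theorem expMoment_rename {k : ℕ} (σ : Equiv.Perm (Fin k)) (p : MvPolynomial (Fin k) ℝ) :
    expMoment k (rename σ p) = expMoment k p := by
  induction p using MvPolynomial.induction_on' with
  | monomial s c =>
    rw [rename_monomial, expMoment_monomial, expMoment_monomial, ← Equiv.prod_comp σ]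
    simp [Finsupp.mapDomain_apply σ.injective]
  | add p q hp hq => simp only [map_add, hp, hq]

/-- The second elementary symmetric polynomial, written through power sums. -/
noncomputable def e2Poly (k : ℕ) : MvPolynomial (Fin k) ℝ :=
  C (1 / 2) * ((∑ i, X i) ^ 2 - ∑ i, X i ^ 2)

theorem eval_e2Poly {k : ℕ} (x : Fin k → ℝ) : eval x (e2Poly k) = e2 x := by
  have h : (∑ i, x i) ^ 2 = ∑ i, x i ^ 2 + 2 * e2 x := by
    induction k with
    | zero => simp [e2]
    | succ k ih =>
      have hs : e2 x = x 0 * ∑ i : Fin k, x i.succ + e2 (fun i : Fin k => x i.succ) := by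
        simp [e2, Fin.sum_univ_succ, Fin.Ioi_zero_eq_map, -Fin.map_succEmb_Ioi,
          Finset.mul_sum]
      have := ih fun i => x i.succ
      rw [hs, Fin.sum_univ_succ, Fin.sum_univ_succ]
      linear_combination this
  simp only [e2Poly, map_mul, eval_C, map_sub, map_pow, map_sum, eval_X, h]
  ring

theorem isHomogeneous_e2Poly (k : ℕ) : (e2Poly k).IsHomogeneous 2 := by
  refine IsHomogeneous.C_mul (IsHomogeneous.sub ?_ ?_) _
  · exact (IsHomogeneous.sum _ _ 1 fun i _ => isHomogeneous_X ℝ i).pow 2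
  · exact IsHomogeneous.sum _ _ 2 fun i _ => (isHomogeneous_X ℝ i).pow 2

theorem isHomogeneous_e2Poly_pow (k m : ℕ) : (e2Poly k ^ m).IsHomogeneous (2 * m) :=
  (isHomogeneous_e2Poly k).pow m

theorem rename_e2Poly {k : ℕ} (σ : Equiv.Perm (Fin k)) : rename σ (e2Poly k) = e2Poly k := by
  simp only [e2Poly, map_mul, map_sub, map_pow, map_sum, rename_X, rename_C,
    Equiv.sum_comp σ (fun i => (X i : MvPolynomial (Fin k) ℝ)),
    Equiv.sum_comp σ (fun i => (X i ^ 2 : MvPolynomial (Fin k) ℝ))]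

theorem pderiv_e2Poly {k : ℕ} (i : Fin k) : pderiv i (e2Poly k) = (∑ j, X j) - X i := by
  have h : (C (1 / 2) : MvPolynomial (Fin k) ℝ) * 2 = 1 := by
    rw [show (2 : MvPolynomial (Fin k) ℝ) = C 2 from (map_ofNat C 2).symm, ← C_mul]
    norm_num
  have h1 : ∑ j, pderiv i (X j : MvPolynomial (Fin k) ℝ) = 1 := by
    simp [pderiv_X, Pi.single_apply]
  have h2 : ∑ j, pderiv i (X j ^ 2 : MvPolynomial (Fin k) ℝ) = 2 * X i := by
    simp [pderiv_X, Pi.single_apply]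
  rw [e2Poly, pderiv_C_mul, map_sub, pderiv_pow, map_sum, map_sum, h1, h2]
  push_cast
  linear_combination ((∑ j, X j) - X i) * h

theorem aeval_cons_e2Poly (k : ℕ) :
    aeval (Fin.cons 0 X : Fin (k + 1) → MvPolynomial (Fin k) ℝ) (e2Poly (k + 1)) = e2Poly k := by
  simp [e2Poly, Fin.sum_univ_succ, algebraMap_eq]

theorem expMoment_X_mul_e2Poly_pow {k : ℕ} (m : ℕ) :
    ((k + 1 : ℕ) : ℝ) * expMoment (k + 1) (X 0 * e2Poly (k + 1) ^ m) =
      ((k + 1 : ℕ) + (2 * m : ℕ)) * expMoment (k + 1) (e2Poly (k + 1) ^ m) := by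
  rw [← expMoment_sum_X_mul (isHomogeneous_e2Poly_pow _ m), Finset.sum_mul, map_sum]
  have h (i : Fin (k + 1)) : expMoment (k + 1) (X i * e2Poly (k + 1) ^ m) =
      expMoment (k + 1) (X 0 * e2Poly (k + 1) ^ m) := by
    rw [← expMoment_rename (Equiv.swap 0 i), map_mul, map_pow, rename_e2Poly, rename_X,
      Equiv.swap_apply_right]
  simp [h]

theorem expMoment_e2Poly_pow_succ (k m : ℕ) :
    expMoment (k + 1) (e2Poly (k + 1) ^ (m + 1)) =
      (m + 1) * (k + 1 + 2 * m) * (k / (k + 1)) * expMoment (k + 1) (e2Poly (k + 1) ^ m) +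
        expMoment k (e2Poly k ^ (m + 1)) := by
  rw [expMoment_eq_pderiv_add, map_pow (aeval _), aeval_cons_e2Poly, pderiv_pow, pderiv_e2Poly]
  have hX := expMoment_X_mul_e2Poly_pow (k := k) m
  have hE := expMoment_sum_X_mul (isHomogeneous_e2Poly_pow (k + 1) m)
  have h : ((m + 1 : ℕ) : MvPolynomial (Fin (k + 1)) ℝ) * e2Poly (k + 1) ^ (m + 1 - 1) *
      ((∑ j, X j) - X 0) = (m + 1) • ((∑ j, X j) * e2Poly (k + 1) ^ m) -
        (m + 1) • (X 0 * e2Poly (k + 1) ^ m) := by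
    simp only [nsmul_eq_mul, Nat.add_sub_cancel]
    ring
  rw [h, map_sub, map_nsmul, map_nsmul, hE]
  simp only [nsmul_eq_mul]
  push_cast at hX ⊢
  have hk : (k + 1 : ℝ) ≠ 0 := by positivity
  field_simp
  linear_combination (-(m + 1 : ℝ)) * hX

theorem isHomogeneous_e2Poly_pow_mul (k m n : ℕ) :
    (e2Poly k ^ m * (∑ i, X i) ^ n).IsHomogeneous (2 * m + n) := by
  simpa using (isHomogeneous_e2Poly_pow k m).mul
    ((IsHomogeneous.sum univ _ 1 fun i _ => isHomogeneous_X ℝ i).pow n)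

theorem expMoment_e2Poly_pow_mul (k m n : ℕ) (hk : 1 ≤ k) :
    expMoment k (e2Poly k ^ m * (∑ i, X i) ^ n) =
      ((2 * m + n + k - 1).factorial : ℝ) / ((2 * m + k - 1).factorial : ℝ) *
        expMoment k (e2Poly k ^ m) := by
  induction n with
  | zero => simp [Nat.factorial_ne_zero]
  | succ n ih =>
    have h := expMoment_sum_X_mul (isHomogeneous_e2Poly_pow_mul k m n)
    rw [pow_succ, ← mul_assoc, mul_comm, h, ih,
      show 2 * m + (n + 1) + k - 1 = (2 * m + n + k - 1) + 1 by omega, Nat.factorial_succ,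
      show 2 * m + n + k - 1 + 1 = 2 * m + n + k by omega]
    push_cast
    ring

/-- Weighted sum over the weakly decreasing tuples `m ≥ s₀ ≥ ⋯ ≥ s_{r-1} ≥ 1`. -/
noncomputable def chainSum (r : ℕ) (w : Fin r → ℕ → ℝ) (m : ℕ) : ℝ :=
  ∑ s ∈ (Fintype.piFinset fun _ : Fin r => Finset.Icc 1 m).filter
    (fun s => ∀ i j : Fin r, i ≤ j → s j ≤ s i), ∏ i : Fin r, w i (s i)

theorem chainSum_zero (w : Fin 0 → ℕ → ℝ) (m : ℕ) : chainSum 0 w m = 1 := by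
  simp [chainSum]

theorem chainSum_succ (r : ℕ) (w : Fin (r + 1) → ℕ → ℝ) (m : ℕ) :
    chainSum (r + 1) w m =
      ∑ a ∈ Finset.Icc 1 m, w 0 a * chainSum r (fun i => w i.succ) a := by
  simp only [chainSum, Finset.mul_sum]
  rw [Finset.sum_sigma']
  refine Finset.sum_bij' (fun s _ => ⟨s 0, Fin.tail s⟩) (fun t _ => Fin.cons t.1 t.2)
    ?_ ?_ ?_ ?_ ?_
  · intro s hs
    simp only [Finset.mem_filter, Fintype.mem_piFinset, Finset.mem_Icc, Finset.mem_sigma,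
      Fin.tail] at hs ⊢
    exact ⟨hs.1 0, fun i => ⟨(hs.1 _).1, hs.2 _ _ (Fin.zero_le _)⟩,
      fun i j hij => hs.2 _ _ (Fin.succ_le_succ_iff.2 hij)⟩
  · intro t ht
    simp only [Finset.mem_filter, Fintype.mem_piFinset, Finset.mem_Icc, Finset.mem_sigma] at ht ⊢
    obtain ⟨h0, h1, h2⟩ := ht
    refine ⟨fun i => ?_, fun i j hij => ?_⟩
    · cases i using Fin.cases with
      | zero => simpa using h0
      | succ i => simpa using ⟨(h1 i).1, (h1 i).2.trans h0.2⟩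
    · cases i using Fin.cases with
      | zero =>
        cases j using Fin.cases with
        | zero => simp
        | succ j => simpa using (h1 j).2
      | succ i =>
        cases j using Fin.cases with
        | zero => exact absurd hij (by simp)
        | succ j => simpa using h2 i j (Fin.succ_le_succ_iff.1 hij)
  · intro s _
    simp
  · intro t _
    simp
  · intro s _
    simp [Fin.prod_univ_succ, Fin.tail]

/-- The factor contributed by `j` (standing for `k - i`) with exponent `s`. -/
noncomputable def chainWeight (j s : ℕ) : ℝ :=
  ((j ^ 2 - 1 : ℕ) : ℝ) ^ s * poch ((j : ℝ) / 2) s /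
    ((j : ℝ) ^ (2 * s) * poch (((j + 1 : ℕ) : ℝ) / 2) s)

/-- The bracketed factor of the formula. -/
noncomputable def chainTotal (k m : ℕ) : ℝ :=
  1 + ∑ r ∈ Finset.Icc 1 (k - 2), chainSum r (fun i => chainWeight (k - (i.val + 1))) m

theorem chainTotal_eq_sum_range (k m : ℕ) :
    chainTotal (k + 2) m =
      ∑ r ∈ range (k + 1), chainSum r (fun i => chainWeight (k + 2 - (i.val + 1))) m := by
  rw [chainTotal, Finset.sum_range_succ', chainSum_zero, add_comm, Nat.add_sub_cancel,
    Finset.range_eq_Ico, Finset.sum_Ico_add' (fun r =>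
      chainSum r (fun i => chainWeight (k + 2 - (i.val + 1))) m) 0 k 1]
  rfl

theorem chainTotal_two (m : ℕ) : chainTotal 2 m = 1 := by
  simp [chainTotal]

theorem chainTotal_succ (k m : ℕ) :
    chainTotal (k + 3) m =
      1 + ∑ a ∈ Finset.Icc 1 m, chainWeight (k + 2) a * chainTotal (k + 2) a := by
  rw [show k + 3 = k + 1 + 2 from rfl, chainTotal_eq_sum_range, Finset.sum_range_succ',
    chainSum_zero, add_comm]
  simp only [chainSum_succ, chainTotal_eq_sum_range, Finset.mul_sum]
  rw [Finset.sum_comm]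
  simp

theorem chainTotal_zero (k : ℕ) : chainTotal (k + 2) 0 = 1 := by
  cases k with
  | zero => exact chainTotal_two 0
  | succ k => simp [chainTotal_succ]

theorem chainTotal_succ_succ (k m : ℕ) :
    chainTotal (k + 3) (m + 1) = chainTotal (k + 3) m +
      chainWeight (k + 2) (m + 1) * chainTotal (k + 2) (m + 1) := by
  rw [chainTotal_succ, chainTotal_succ, Finset.sum_Icc_succ_top (by omega)]
  ring

theorem poch_succ (y : ℝ) (m : ℕ) : poch y (m + 1) = poch y m * (y + m) :=
  Finset.prod_range_succ _ _

theorem poch_pos {y : ℝ} (hy : 0 < y) (m : ℕ) : 0 < poch y m :=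
  Finset.prod_pos fun _ _ => by positivity

theorem poch_mul_chainWeight (j s : ℕ) (hj : 2 ≤ j) :
    poch (((j + 1 : ℕ) : ℝ) / 2) s * (2 * (j : ℝ) / ((j + 1 : ℕ) : ℝ)) ^ s * chainWeight j s =
      poch ((j : ℝ) / 2) s * (2 * ((j : ℝ) - 1) / j) ^ s := by
  have h1 : (0 : ℝ) < j := by positivity
  have hp : poch (((j + 1 : ℕ) : ℝ) / 2) s ≠ 0 := (poch_pos (by positivity) s).ne'
  have h2 : ((j ^ 2 - 1 : ℕ) : ℝ) = ((j : ℝ) + 1) * (j - 1) := by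
    rw [Nat.cast_sub (Nat.one_le_pow _ _ (by omega))]
    push_cast
    ring
  have h3 : (2 * (j : ℝ) / ((j + 1 : ℕ) : ℝ)) ^ s * (((j : ℝ) + 1) * (j - 1)) ^ s =
      (2 * ((j : ℝ) - 1) / j) ^ s * (j : ℝ) ^ (2 * s) := by
    rw [pow_mul, ← mul_pow, ← mul_pow]
    congr 1
    push_cast
    field_simp
  rw [chainWeight, h2, mul_div_assoc', div_eq_iff (by positivity)]
  linear_combination (poch (((j + 1 : ℕ) : ℝ) / 2) s * poch ((j : ℝ) / 2) s) * h3

theorem expMoment_one_e2Poly_pow_succ (m : ℕ) : expMoment 1 (e2Poly 1 ^ (m + 1)) = 0 := by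
  simp [e2Poly]

theorem expMoment_e2Poly_pow (k m : ℕ) :
    expMoment (k + 2) (e2Poly (k + 2) ^ m) =
      (m.factorial : ℝ) * poch (((k + 2 : ℕ) : ℝ) / 2) m *
        (2 * (((k + 2 : ℕ) : ℝ) - 1) / ((k + 2 : ℕ) : ℝ)) ^ m * chainTotal (k + 2) m := by
  induction k generalizing m with
  | zero =>
    induction m with
    | zero => simp [chainTotal_two, poch, expMoment_one]
    | succ m ih =>
      rw [expMoment_e2Poly_pow_succ, zero_add, expMoment_one_e2Poly_pow_succ, ih,
        chainTotal_two, chainTotal_two, poch_succ, Nat.factorial_succ]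
      push_cast
      norm_num
      ring
  | succ k ihk =>
    induction m with
    | zero => simp [chainTotal_zero, poch, expMoment_one]
    | succ m ih =>
      have hw := poch_mul_chainWeight (k + 2) (m + 1) (by omega)
      have hX : 2 * ((k + 2 : ℕ) : ℝ) / ((k + 2 + 1 : ℕ) : ℝ) =
          2 * (((k + 1 + 2 : ℕ) : ℝ) - 1) / ((k + 1 + 2 : ℕ) : ℝ) := by
        push_cast
        ring
      have hc : ((m : ℝ) + 1) * (((k + 1 + 1 : ℕ) : ℝ) + 1 + 2 * m) *
          (((k + 1 + 1 : ℕ) : ℝ) / (((k + 1 + 1 : ℕ) : ℝ) + 1)) =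
          (m + 1) * (((k + 1 + 2 : ℕ) : ℝ) / 2 + m) *
            (2 * (((k + 1 + 2 : ℕ) : ℝ) - 1) / ((k + 1 + 2 : ℕ) : ℝ)) := by
        push_cast
        field_simp
        ring
      rw [hX, show k + 2 + 1 = k + 1 + 2 from rfl] at hw
      rw [expMoment_e2Poly_pow_succ, ih, ihk, chainTotal_succ_succ, hc,
        show k + 3 = k + 1 + 2 from rfl]
      generalize 2 * (((k + 1 + 2 : ℕ) : ℝ) - 1) / ((k + 1 + 2 : ℕ) : ℝ) = x at hw ⊢
      generalize 2 * (((k + 2 : ℕ) : ℝ) - 1) / ((k + 2 : ℕ) : ℝ) = y at hw ⊢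
      rw [poch_succ (((k + 1 + 2 : ℕ) : ℝ) / 2)] at hw ⊢
      rw [Nat.factorial_succ, Nat.cast_mul, Nat.cast_add_one m]
      linear_combination (-((m + 1 : ℝ) * m.factorial * chainTotal (k + 2) (m + 1))) * hw

end ExpMoment

theorem stmt1 (k : ℕ) (hk : 2 ≤ k) (m n : ℕ) :
    ∫ x : Fin k → ℝ in Set.univ.pi fun _ => Set.Ici (0 : ℝ),
        e2 x ^ m * e1 x ^ n * Real.exp (-(e1 x)) =
      (m.factorial : ℝ) * ((2 * m + n + k - 1).factorial : ℝ) * poch ((k : ℝ) / 2) m /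
          ((2 * m + k - 1).factorial : ℝ) *
        (2 * ((k : ℝ) - 1) / k) ^ m *
        (1 + ∑ r ∈ Finset.Icc 1 (k - 2),
          ∑ s ∈ (Fintype.piFinset fun _ : Fin r => Finset.Icc 1 m).filter
              (fun s => ∀ i j : Fin r, i ≤ j → s j ≤ s i),
            ∏ i : Fin r,
              (((k - (i.val + 1)) ^ 2 - 1 : ℕ) : ℝ) ^ s i *
                  poch (((k - (i.val + 1) : ℕ) : ℝ) / 2) (s i) /
                (((k - (i.val + 1) : ℕ) : ℝ) ^ (2 * s i) *
                  poch (((k - (i.val + 1) + 1 : ℕ) : ℝ) / 2) (s i))) := by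
  obtain ⟨j, rfl⟩ := Nat.exists_eq_add_of_le' hk
  have h := ExpMoment.integral_eval_mul_exp
    (ExpMoment.e2Poly (j + 2) ^ m * (∑ i, MvPolynomial.X i) ^ n)
  simp only [map_mul, map_pow, ExpMoment.eval_e2Poly, map_sum, MvPolynomial.eval_X] at h
  refine h.trans ?_
  rw [ExpMoment.expMoment_e2Poly_pow_mul _ _ _ (by omega), ExpMoment.expMoment_e2Poly_pow]
  change _ = _ * _ * ExpMoment.chainTotal (j + 2) m
  ring
end
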